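/- Let G be a group of order p^m, p prime, and [c] ∈ H²(G, ℂ*) any cohomology class. If i satisfies (i² + i − 2)/2 < m, then [c] admits an isotropic normal abelian subgroup A ◁ G of order p^i. Moreover, any normal abelian isotropic subgroup of order p^{i−1} is contained in a normal abelian isotropic subgroup of order p^i. -/

import Mathlib

/-!
Let `B` be a normal abelian isotropic subgroup of order `p ^ j`. For `g` centralizing `B`, the map
`b ↦ c g b / c b g` is a character of `B`, and it depends multiplicatively on `g`; the elements with
trivial character form a normal subgroup `T ≥ B` of `G`. The group `B` has at most `|B| = p ^ j`
characters, and the centralizer of `B` has index at most `p ^ (0 + 1 + ⋯ + (j - 1))`: in a chain of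
normal subgroups `N < N⟨a⟩` of index `p`, all conjugates of `a` lie in `Na`. So `T` has index at
most `p ^ (j (j + 1) / 2)`, which forces `B < T` when `j (j + 1) / 2 + j < m`. A central subgroup of
order `p` of `G ⧸ B` inside `T / B` then yields `A = B⟨a⟩` with `a ∈ T`. The restriction of `c` to
the abelian group `A` is symmetric, hence a coboundary, because the abelian extension that it
defines has a divisible kernel and so splits.
-/

open Subgroup
open scoped commutatorElement

lemma normal_of_le_center {G : Type*} [Group G] {H : Subgroup G} (hH : H ≤ center G) :
    H.Normal where
  conj_mem z hz g := by rwa [mem_center_iff.1 (hH hz) g, mul_inv_cancel_right]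

lemma index_centralizer_zpowers_le {G : Type*} [Group G] {N : Subgroup G} [Finite N] {a : G}
    (h : ∀ g : G, ⁅g, a⁆ ∈ N) : (centralizer (zpowers a : Set G)).index ≤ Nat.card N := by
  have hindex : (centralizer (zpowers a : Set G)).index =
      (MulAction.orbit (ConjAct G) a).ncard := by
    rw [← MulAction.index_stabilizer, ConjAct.stabilizer_eq_centralizer, zpowers_eq_closure,
      centralizer_closure]
    rfl
  have horbit : MulAction.orbit (ConjAct G) a ⊆ (· * a) '' (N : Set G) := by
    rintro _ ⟨g, rfl⟩
    exact ⟨_, h (ConjAct.ofConjAct g), by simp [commutatorElement_def, ConjAct.smul_def]⟩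
  calc (centralizer (zpowers a : Set G)).index
      = (MulAction.orbit (ConjAct G) a).ncard := hindex
    _ ≤ ((· * a) '' (N : Set G)).ncard := Set.ncard_le_ncard horbit (Set.toFinite _)
    _ ≤ (N : Set G).ncard := Set.ncard_image_le (Set.toFinite _)
    _ = Nat.card N := rfl

lemma centralizer_inf_le_centralizer_sup {G : Type*} [Group G] (H K : Subgroup G) :
    centralizer (H : Set G) ⊓ centralizer (K : Set G) ≤
      centralizer ((H ⊔ K : Subgroup G) : Set G) :=
  le_centralizer_iff.1
    (sup_le (le_centralizer_iff.1 inf_le_left) (le_centralizer_iff.1 inf_le_right))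

section PGroup

variable {G : Type*} [Group G] [Finite G] {p : ℕ} [Fact p.Prime]

lemma exists_mem_center_orderOf_eq_prime (hG : IsPGroup p G) {H : Subgroup G} [H.Normal]
    (hH : H ≠ ⊥) : ∃ z ∈ H, z ∈ center G ∧ orderOf z = p := by
  have : Nontrivial H := H.nontrivial_iff_ne_bot.2 hH
  obtain ⟨n, hn, hcard⟩ := (hG.to_subgroup H).nontrivial_iff_card.1 this
  have hconj : IsPGroup p (ConjAct G) := hG.of_equiv ConjAct.toConjAct
  obtain ⟨z, hz, hz1⟩ := hconj.exists_fixed_point_of_prime_dvd_card_of_fixed_point H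
    (hcard ▸ dvd_pow_self p hn.ne') (a := 1) smul_one
  have hzcenter : (z : G) ∈ center G := by
    rw [← SetLike.mem_coe, ← ConjAct.fixedPoints_eq_center]
    exact fun g ↦ congrArg Subtype.val (hz g)
  have hne : H ⊓ center G ≠ ⊥ := fun h ↦
    hz1 (Subtype.ext (mem_bot.1 (h ▸ ⟨z.2, hzcenter⟩ : (z : G) ∈ (⊥ : Subgroup G))).symm)
  have hdvd : p ∣ Nat.card ↥(H ⊓ center G) :=
    (hG.to_subgroup _).card_eq_or_dvd.resolve_left (mt card_eq_one.1 hne)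
  obtain ⟨x, hx⟩ := exists_prime_orderOf_dvd_card' p hdvd
  exact ⟨x, x.2.1, x.2.2, by rwa [orderOf_coe]⟩

lemma exists_normal_sup_zpowers_of_lt (hG : IsPGroup p G) {N M : Subgroup G} [N.Normal] [M.Normal]
    (hNM : N < M) : ∃ a ∈ M, (∀ g : G, ⁅g, a⁆ ∈ N) ∧ (N ⊔ zpowers a).Normal ∧
      Nat.card ↥(N ⊔ zpowers a) = Nat.card N * p := by
  have hMnormal : (M.map (QuotientGroup.mk' N)).Normal :=
    ‹M.Normal›.map _ (QuotientGroup.mk'_surjective N)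
  have hMne : M.map (QuotientGroup.mk' N) ≠ ⊥ := by
    rw [Ne, Subgroup.map_eq_bot_iff, QuotientGroup.ker_mk']
    exact hNM.not_ge
  obtain ⟨_, ⟨a, haM, rfl⟩, hcenter, horder⟩ :=
    exists_mem_center_orderOf_eq_prime (hG.to_quotient N) hMne
  have hsup : N ⊔ zpowers a = (zpowers (QuotientGroup.mk' N a)).comap (QuotientGroup.mk' N) := by
    rw [← MonoidHom.map_zpowers, comap_map_eq, QuotientGroup.ker_mk', sup_comm]
  refine ⟨a, haM, fun g ↦ ?_, ?_, ?_⟩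
  · rw [← QuotientGroup.eq_one_iff, ← QuotientGroup.mk'_apply, map_commutatorElement,
      commutatorElement_eq_one_iff_mul_comm]
    exact mem_center_iff.1 hcenter _
  · have : (zpowers (QuotientGroup.mk' N a)).Normal := normal_of_le_center (zpowers_le.2 hcenter)
    rw [hsup]
    exact this.comap _
  · rw [hsup, ← horder, ← Nat.card_zpowers]
    exact QuotientGroup.card_preimage_mk N (zpowers (a : G ⧸ N))

lemma exists_normal_le_index_centralizer_le (hG : IsPGroup p G) {B : Subgroup G} [B.Normal]
    {j : ℕ} (hB : Nat.card B = p ^ j) {k : ℕ} (hk : k ≤ j) :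
    ∃ N ≤ B, N.Normal ∧ Nat.card N = p ^ k ∧
      (centralizer (N : Set G)).index ≤ p ^ k.choose 2 := by
  induction k with
  | zero =>
    have htop : centralizer ((⊥ : Subgroup G) : Set G) = ⊤ :=
      centralizer_eq_top_iff_subset.2 (SetLike.coe_subset_coe.2 bot_le)
    exact ⟨⊥, bot_le, inferInstance, by simp,
      by rw [htop, index_top, Nat.choose_zero_succ, pow_zero]⟩
  | succ k ih =>
    obtain ⟨N, hNB, hN, hNcard, hNindex⟩ := ih (by omega)
    have hlt : N < B := by
      refine lt_of_le_of_ne hNB ?_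
      rintro rfl
      have := Nat.pow_right_injective (Fact.out : p.Prime).two_le (hNcard.symm.trans hB)
      omega
    obtain ⟨a, haB, hcomm, hnormal, hcard⟩ := exists_normal_sup_zpowers_of_lt hG hlt
    refine ⟨N ⊔ zpowers a, sup_le hNB (zpowers_le.2 haB), hnormal, by rw [hcard, hNcard, pow_succ],
      ?_⟩
    calc (centralizer ((N ⊔ zpowers a : Subgroup G) : Set G)).index
        ≤ (centralizer (N : Set G) ⊓ centralizer (zpowers a : Set G)).index :=
          index_antitone (centralizer_inf_le_centralizer_sup N (zpowers a))
      _ ≤ (centralizer (N : Set G)).index * (centralizer (zpowers a : Set G)).index := index_inf_le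
      _ ≤ p ^ k.choose 2 * p ^ k :=
          Nat.mul_le_mul hNindex (hNcard ▸ index_centralizer_zpowers_le hcomm)
      _ = p ^ (k + 1).choose 2 := by
          rw [← pow_add, Nat.choose_succ_succ, Nat.choose_one_right, add_comm]

lemma index_centralizer_le_pow_choose_two (hG : IsPGroup p G) {B : Subgroup G} [B.Normal]
    {j : ℕ} (hB : Nat.card B = p ^ j) : (centralizer (B : Set G)).index ≤ p ^ j.choose 2 := by
  obtain ⟨N, hNB, -, hNcard, hindex⟩ := exists_normal_le_index_centralizer_le hG hB le_rfl
  rwa [← eq_of_le_of_card_ge hNB (hB.trans hNcard.symm).le]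

end PGroup

lemma card_monoidHom_units_le {H R : Type*} [Group H] [Finite H] [CommRing R] [IsDomain R] :
    Nat.card (H →* Rˣ) ≤ Nat.card H := by
  have hli := linearIndependent_monoidHom H R
  have := hli.finite
  have := Fintype.ofFinite (H →* R)
  have := Fintype.ofFinite H
  calc Nat.card (H →* Rˣ) = Nat.card (H →* R) :=
        (Nat.card_congr MonoidHom.toHomUnitsMulEquiv.toEquiv).symm
    _ = Fintype.card (H →* R) := Nat.card_eq_fintype_card
    _ ≤ Module.finrank R (H → R) := hli.fintype_card_le_finrank
    _ = Nat.card H := by rw [Module.finrank_fintype_fun_eq_card, Nat.card_eq_fintype_card]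

/-- A 2-cocycle on `G` with values in the trivial `G`-module `M`, written multiplicatively. -/
def IsTwoCocycle {G M : Type*} [Mul G] [Mul M] (c : G → G → M) : Prop :=
  ∀ g h k : G, c g h * c (g * h) k = c h k * c g (h * k)

lemma IsTwoCocycle.apply_one_left {G M : Type*} [MulOneClass G] [Mul M] [IsRightCancelMul M]
    {c : G → G → M} (hc : IsTwoCocycle c) (g : G) : c 1 g = c 1 1 := by
  have := hc 1 1 g
  rw [one_mul, one_mul] at this
  exact (mul_right_cancel this).symm

/-- The subgroup `A` is isotropic for `c`: the restriction of `c` to `A` is a 2-coboundary. -/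
def IsIsotropic {G M : Type*} [Group G] [Group M] (c : G → G → M) (A : Subgroup G) : Prop :=
  ∃ f : A → M, ∀ a b : A, c (a : G) (b : G) = f a * f b * (f (a * b))⁻¹

section Cocycle

variable {G M : Type*} [CommGroup M] {c : G → G → M}

/-- The ratio `c x y / c y x`. For commuting `x` and `y` it is the commutator of lifts of `x` and
`y` to the central extension of `G` by `M` defined by `c`; otherwise it has no intrinsic
meaning. -/
def commutatorPairing (c : G → G → M) (x y : G) : M := c x y / c y x

lemma commutatorPairing_self (x : G) : commutatorPairing c x x = 1 := div_self' _

lemma inv_commutatorPairing (x y : G) : (commutatorPairing c x y)⁻¹ = commutatorPairing c y x :=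
  inv_div _ _

lemma commutatorPairing_eq_one_iff {x y : G} : commutatorPairing c x y = 1 ↔ c x y = c y x :=
  div_eq_one

variable [Group G]

lemma commutatorPairing_mul_right (hc : IsTwoCocycle c) {x y z : G} (hxy : Commute x y)
    (hxz : Commute x z) :
    commutatorPairing c x (y * z) = commutatorPairing c x y * commutatorPairing c x z := by
  rw [commutatorPairing, commutatorPairing, commutatorPairing, div_mul_div_comm,
    div_eq_div_iff_mul_eq_mul]
  refine mul_left_cancel (a := c y z * c y (x * z)) ?_
  calc c y z * c y (x * z) * (c x (y * z) * (c y x * c z x))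
      = c y z * c x (y * z) * (c z x * c y (z * x)) * c y x := by rw [hxz.eq]; ac_rfl
    _ = c x y * c (x * y) z * (c y z * c (y * z) x) * c y x := by rw [← hc, ← hc]
    _ = c y x * c (y * x) z * c x y * c (y * z) x * c y z := by rw [hxy.eq]; ac_rfl
    _ = c y z * c y (x * z) * (c x y * c x z * c (y * z) x) := by rw [hc]; ac_rfl

lemma commutatorPairing_mul_left (hc : IsTwoCocycle c) {x y z : G} (hxz : Commute x z)
    (hyz : Commute y z) :
    commutatorPairing c (x * y) z = commutatorPairing c x z * commutatorPairing c y z := by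
  rw [← inv_commutatorPairing, commutatorPairing_mul_right hc hxz.symm hyz.symm, mul_inv,
    inv_commutatorPairing, inv_commutatorPairing]

lemma commutatorPairing_one_left (hc : IsTwoCocycle c) (x : G) : commutatorPairing c 1 x = 1 := by
  simpa using commutatorPairing_mul_left hc (Commute.one_left x) (Commute.one_left x)

lemma commutatorPairing_inv_left (hc : IsTwoCocycle c) {x y : G} (hxy : Commute x y) :
    commutatorPairing c x⁻¹ y = (commutatorPairing c x y)⁻¹ := by
  rw [eq_inv_iff_mul_eq_one, ← commutatorPairing_mul_left hc hxy.inv_left hxy, inv_mul_cancel,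
    commutatorPairing_one_left hc]

/-- Conjugating by `h` changes a cocycle by a coboundary. -/
lemma apply_conj_conj (hc : IsTwoCocycle c) (h x y : G) :
    c (h * x * h⁻¹) (h * y * h⁻¹) * (c h x / c (h * x * h⁻¹) h) * (c h y / c (h * y * h⁻¹) h) =
      c x y * (c h (x * y) / c (h * (x * y) * h⁻¹) h) := by
  set x' := h * x * h⁻¹ with hx'
  set y' := h * y * h⁻¹ with hy'
  have hxh : x' * h = h * x := inv_mul_cancel_right _ _
  have hyh : y' * h = h * y := inv_mul_cancel_right _ _
  have hxy : h * (x * y) * h⁻¹ = x' * y' := by rw [hx', hy']; group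
  have key : c x' y' * c h x * c h y * c (x' * y') h = c x y * c h (x * y) * c x' h * c y' h := by
    refine mul_right_cancel (b := c x' (h * y)) ?_
    calc c x' y' * c h x * c h y * c (x' * y') h * c x' (h * y)
        = (c x' y' * c (x' * y') h) * c h x * (c h y * c x' (h * y)) := by ac_rfl
      _ = (c y' h * c x' (h * y)) * c h x * (c x' h * c (h * x) y) := by
          rw [hc, hyh, ← hc x' h y, hxh]
      _ = c y' h * c x' (h * y) * c x' h * (c h x * c (h * x) y) := by ac_rfl
      _ = c x y * c h (x * y) * c x' h * c y' h * c x' (h * y) := by rw [hc]; ac_rfl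
  rw [hxy, mul_assoc, div_mul_div_comm, ← mul_div_assoc, ← mul_div_assoc,
    div_eq_div_iff_mul_eq_mul]
  simpa only [mul_assoc] using key

lemma commutatorPairing_conj_conj (hc : IsTwoCocycle c) (h : G) {x y : G} (hxy : Commute x y) :
    commutatorPairing c (h * x * h⁻¹) (h * y * h⁻¹) = commutatorPairing c x y := by
  have hx := apply_conj_conj hc h x y
  have hy := apply_conj_conj hc h y x
  rw [← hxy.eq, mul_right_comm] at hy
  have := congrArg₂ (· / ·) hx hy
  simpa only [commutatorPairing, mul_div_mul_right_eq_div] using this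

/-- The commutator pairing as a homomorphism from the centralizer of `B` to the group of characters
of `B` with values in `M`. -/
def centralizerPairing (hc : IsTwoCocycle c) (B : Subgroup G) :
    centralizer (B : Set G) →* B →* M :=
  MonoidHom.mk'
    (fun g ↦ MonoidHom.mk' (fun b ↦ commutatorPairing c (g : G) b) fun a b ↦
      commutatorPairing_mul_right hc (g.2 a a.2).symm (g.2 b b.2).symm)
    fun g h ↦ MonoidHom.ext fun b ↦
      commutatorPairing_mul_left hc (g.2 b b.2).symm (h.2 b b.2).symm

/-- The elements `g` of `G` that commute with all elements of `S` and satisfy `c g s = c s g` for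
`s ∈ S`. This is the image in `G` of the centralizer of the preimage of `S` in the central extension
of `G` by `M` defined by `c`. -/
def twistedCentralizer (hc : IsTwoCocycle c) (S : Set G) : Subgroup G where
  carrier := {g | ∀ s ∈ S, Commute g s ∧ commutatorPairing c g s = 1}
  one_mem' s _ := ⟨Commute.one_left s, commutatorPairing_one_left hc s⟩
  mul_mem' hg hh s hs := by
    refine ⟨(hg s hs).1.mul_left (hh s hs).1, ?_⟩
    rw [commutatorPairing_mul_left hc (hg s hs).1 (hh s hs).1, (hg s hs).2, (hh s hs).2, one_mul]
  inv_mem' hg s hs := by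
    refine ⟨(hg s hs).1.inv_left, ?_⟩
    rw [commutatorPairing_inv_left hc (hg s hs).1, (hg s hs).2, inv_one]

lemma subset_twistedCentralizer_comm {hc : IsTwoCocycle c} {S T : Set G} :
    S ⊆ twistedCentralizer hc T ↔ T ⊆ twistedCentralizer hc S := by
  have hswap {S T : Set G} (h : S ⊆ twistedCentralizer hc T) : T ⊆ twistedCentralizer hc S :=
    fun t ht s hs ↦ ⟨(h hs t ht).1.symm, by rw [← inv_commutatorPairing, (h hs t ht).2, inv_one]⟩
  exact ⟨hswap, hswap⟩

lemma zpowers_le_twistedCentralizer_zpowers (hc : IsTwoCocycle c) (a : G) :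
    zpowers a ≤ twistedCentralizer hc (zpowers a) := by
  have ha : a ∈ twistedCentralizer hc {a} := by
    rintro _ rfl
    exact ⟨.refl _, commutatorPairing_self _⟩
  exact zpowers_le.2 (subset_twistedCentralizer_comm.1 (zpowers_le.2 ha) rfl)

lemma sup_le_twistedCentralizer_sup {hc : IsTwoCocycle c} {H K : Subgroup G}
    (hH : H ≤ twistedCentralizer hc H) (hKH : K ≤ twistedCentralizer hc H)
    (hK : K ≤ twistedCentralizer hc K) :
    H ⊔ K ≤ twistedCentralizer hc (H ⊔ K : Subgroup G) := by
  have hHK : H ≤ twistedCentralizer hc K := subset_twistedCentralizer_comm.1 hKH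
  exact sup_le (subset_twistedCentralizer_comm.1 (sup_le hH hKH))
    (subset_twistedCentralizer_comm.1 (sup_le hHK hK))

instance normal_twistedCentralizer {hc : IsTwoCocycle c} {B : Subgroup G} [hB : B.Normal] :
    (twistedCentralizer hc B).Normal where
  conj_mem g hg h b hb := by
    obtain ⟨hcomm, hpairing⟩ := hg _ (hB.conj_mem' b hb h)
    have hconj : h * (h⁻¹ * b * h) * h⁻¹ = b := by group
    rw [← hconj]
    exact ⟨hcomm.conj h, (commutatorPairing_conj_conj hc h hcomm).trans hpairing⟩

lemma index_twistedCentralizer_le {hc : IsTwoCocycle c} {B : Subgroup G} [Finite (B →* M)] :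
    (twistedCentralizer hc B).index ≤ Nat.card (B →* M) * (centralizer (B : Set G)).index := by
  have hle : twistedCentralizer hc B ≤ centralizer (B : Set G) := fun g hg b hb ↦ (hg b hb).1.symm
  have hker : (twistedCentralizer hc B).subgroupOf (centralizer B) =
      (centralizerPairing hc B).ker := by
    ext g
    rw [mem_subgroupOf, MonoidHom.mem_ker, MonoidHom.ext_iff]
    exact ⟨fun h b ↦ (h b b.2).2, fun h b hb ↦ ⟨(g.2 b hb).symm, h ⟨b, hb⟩⟩⟩
  rw [← relIndex_mul_index hle, relIndex, hker, index_ker]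
  exact Nat.mul_le_mul_right _ (Nat.card_le_card_of_injective _ Subtype.val_injective)

end Cocycle

lemma exists_monoidHom_comp_eq_of_rootableBy {N E M : Type*} [CommGroup N] [CommGroup E]
    [CommGroup M] [RootableBy M ℕ] {ι : N →* E} (hι : Function.Injective ι) (f : N →* M) :
    ∃ g : E →* M, g.comp ι = f := by
  let := Group.rootableByIntOfRootableByNat M
  let : DivisibleBy (Additive M) ℤ :=
    { div := fun a n ↦ .ofMul (RootableBy.root a.toMul n)
      div_zero := fun a ↦ RootableBy.root_zero a.toMul
      div_cancel := fun a hn ↦ RootableBy.root_cancel a.toMul hn }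
  obtain ⟨g, hg⟩ := (Module.Baer.of_divisible (Additive M)).extension_property_addMonoidHom
    (MonoidHom.toAdditive ι) hι (MonoidHom.toAdditive f)
  exact ⟨MonoidHom.toAdditive.symm g, MonoidHom.toAdditive.injective hg⟩

/-- The set `M × A` underlying the extension of `A` by `M` defined by a 2-cocycle `c`, with
multiplication `(x, a) * (y, b) = (x * y * c a b, a * b)`. -/
@[ext] structure CocycleExtension {A M : Type*} (c : A → A → M) where
  fiber : M
  base : A

namespace CocycleExtension

variable {A M : Type*} [CommGroup A] [CommGroup M] {c : A → A → M}

instance : Mul (CocycleExtension c) :=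
  ⟨fun x y ↦ ⟨x.fiber * y.fiber * c x.base y.base, x.base * y.base⟩⟩

lemma mk_mul_mk (x y : M) (a b : A) :
    (⟨x, a⟩ * ⟨y, b⟩ : CocycleExtension c) = ⟨x * y * c a b, a * b⟩ := rfl

instance : One (CocycleExtension c) := ⟨⟨(c 1 1)⁻¹, 1⟩⟩

lemma one_def : (1 : CocycleExtension c) = ⟨(c 1 1)⁻¹, 1⟩ := rfl

instance : Inv (CocycleExtension c) :=
  ⟨fun x ↦ ⟨x.fiber⁻¹ * (c x.base⁻¹ x.base)⁻¹ * (c 1 1)⁻¹, x.base⁻¹⟩⟩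

lemma inv_mk (x : M) (a : A) :
    (⟨x, a⟩⁻¹ : CocycleExtension c) = ⟨x⁻¹ * (c a⁻¹ a)⁻¹ * (c 1 1)⁻¹, a⁻¹⟩ := rfl

/-- The extension of abelian groups defined by a symmetric 2-cocycle. -/
abbrev commGroup (hc : IsTwoCocycle c) (hsymm : ∀ a b, c a b = c b a) :
    CommGroup (CocycleExtension c) where
  __ := Group.ofLeftAxioms (G := CocycleExtension c)
    (by
      rintro ⟨x, a⟩ ⟨y, b⟩ ⟨z, d⟩
      rw [mk_mul_mk, mk_mul_mk, mk_mul_mk, mk_mul_mk, mul_assoc a b d]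
      congr 1
      calc x * y * c a b * z * c (a * b) d = x * y * z * (c a b * c (a * b) d) := by ac_rfl
        _ = x * (y * z * c b d) * c a (b * d) := by rw [hc]; ac_rfl)
    (by
      rintro ⟨x, a⟩
      rw [one_def, mk_mul_mk, hc.apply_one_left a, one_mul, mul_right_comm, inv_mul_cancel,
        one_mul])
    (by
      rintro ⟨x, a⟩
      rw [inv_mk, mk_mul_mk, one_def, inv_mul_cancel]
      congr 1
      calc x⁻¹ * (c a⁻¹ a)⁻¹ * (c 1 1)⁻¹ * x * c a⁻¹ a
          = x⁻¹ * x * ((c a⁻¹ a)⁻¹ * c a⁻¹ a) * (c 1 1)⁻¹ := by ac_rfl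
        _ = (c 1 1)⁻¹ := by rw [inv_mul_cancel, inv_mul_cancel, one_mul, one_mul])
  mul_comm := by
    rintro ⟨x, a⟩ ⟨y, b⟩
    rw [mk_mul_mk, mk_mul_mk, mul_comm x, mul_comm a, hsymm]

end CocycleExtension

open CocycleExtension in
lemma exists_coboundary_of_symm {A M : Type*} [CommGroup A] [CommGroup M] [RootableBy M ℕ]
    {c : A → A → M} (hc : IsTwoCocycle c) (hsymm : ∀ a b, c a b = c b a) :
    ∃ f : A → M, ∀ a b, c a b = f a * f b * (f (a * b))⁻¹ := by
  let := commGroup hc hsymm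
  let ι : M →* CocycleExtension c := MonoidHom.mk' (fun x ↦ ⟨x * (c 1 1)⁻¹, 1⟩) fun x y ↦ by
    rw [mk_mul_mk, one_mul, ← mul_assoc, inv_mul_cancel_right, mul_right_comm]
  have hι : Function.Injective ι := fun x y h ↦
    mul_right_cancel (congrArg CocycleExtension.fiber h)
  obtain ⟨r, hr⟩ := exists_monoidHom_comp_eq_of_rootableBy hι (MonoidHom.id M)
  have hlift (a b : A) :
      (⟨1, a⟩ * ⟨1, b⟩ : CocycleExtension c) = ι (c a b) * ⟨1, a * b⟩ := by
    change _ = (⟨c a b * (c 1 1)⁻¹, 1⟩ * ⟨1, a * b⟩ : CocycleExtension c)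
    rw [mk_mul_mk, mk_mul_mk, hc.apply_one_left (a * b), one_mul, one_mul, one_mul, mul_one,
      inv_mul_cancel_right]
  refine ⟨fun a ↦ r ⟨1, a⟩, fun a b ↦ ?_⟩
  rw [eq_mul_inv_iff_mul_eq, ← map_mul, hlift, map_mul]
  exact congrArg (· * _) (DFunLike.congr_fun hr (c a b)).symm

lemma le_twistedCentralizer_self_iff {G M : Type*} [Group G] [CommGroup M] [RootableBy M ℕ]
    {c : G → G → M} {hc : IsTwoCocycle c} {A : Subgroup G} :
    A ≤ twistedCentralizer hc A ↔ (∀ a b : A, a * b = b * a) ∧ IsIsotropic c A := by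
  refine ⟨fun h ↦ ?_, fun ⟨hcomm, f, hf⟩ a ha b hb ↦ ?_⟩
  · have hcomm (a b : A) : a * b = b * a := Subtype.ext (h a.2 b b.2).1
    let : CommGroup A := { (inferInstance : Group A) with mul_comm := hcomm }
    exact ⟨hcomm, exists_coboundary_of_symm (A := A) (c := fun a b ↦ c a b) (fun a b d ↦ hc a b d)
      fun a b ↦ commutatorPairing_eq_one_iff.1 (h a.2 b b.2).2⟩
  · have hab := hcomm ⟨a, ha⟩ ⟨b, hb⟩
    refine ⟨congrArg Subtype.val hab, commutatorPairing_eq_one_iff.2 ?_⟩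
    rw [hf ⟨a, ha⟩ ⟨b, hb⟩, hf ⟨b, hb⟩ ⟨a, ha⟩, hab, mul_comm (f ⟨a, ha⟩)]

lemma exists_normal_le_twistedCentralizer_card_eq {G R : Type*} [Group G] [Finite G]
    [CommRing R] [IsDomain R] {c : G → G → Rˣ} {hc : IsTwoCocycle c} {p m j : ℕ} [Fact p.Prime]
    (hG : Nat.card G = p ^ m) {B : Subgroup G} [B.Normal] (hB : B ≤ twistedCentralizer hc B)
    (hBcard : Nat.card B = p ^ j) (hjm : (j + 1).choose 2 + j < m) :
    ∃ A : Subgroup G, B ≤ A ∧ A.Normal ∧ Nat.card A = p ^ (j + 1) ∧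
      A ≤ twistedCentralizer hc A := by
  have hp : p.Prime := Fact.out
  have hpG : IsPGroup p G := .of_card hG
  have hindex : (twistedCentralizer hc (B : Set G)).index ≤ p ^ (j + 1).choose 2 :=
    calc (twistedCentralizer hc (B : Set G)).index
        ≤ Nat.card (B →* Rˣ) * (centralizer (B : Set G)).index := index_twistedCentralizer_le
      _ ≤ p ^ j * p ^ j.choose 2 :=
          Nat.mul_le_mul (hBcard ▸ card_monoidHom_units_le)
            (index_centralizer_le_pow_choose_two hpG hBcard)
      _ = p ^ (j + 1).choose 2 := by rw [← pow_add, Nat.choose_succ_succ, Nat.choose_one_right]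
  have hne : B ≠ twistedCentralizer hc B := by
    intro heq
    have hcard : p ^ m ≤ p ^ (j + (j + 1).choose 2) := by
      rw [← hG, ← B.card_mul_index, hBcard, pow_add]
      exact Nat.mul_le_mul_left _ (heq ▸ hindex)
    have := (Nat.pow_le_pow_iff_right hp.one_lt).1 hcard
    omega
  obtain ⟨a, ha, -, hnormal, hcard⟩ := exists_normal_sup_zpowers_of_lt hpG (hB.lt_of_ne hne)
  exact ⟨B ⊔ zpowers a, le_sup_left, hnormal, by rw [hcard, hBcard, pow_succ],
    sup_le_twistedCentralizer_sup hB (zpowers_le.2 ha)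
      (zpowers_le_twistedCentralizer_zpowers hc a)⟩

lemma exists_normal_abelian_isotropic_card_eq {G R : Type*} [Group G] [Finite G] [CommRing R]
    [IsDomain R] [RootableBy Rˣ ℕ] {c : G → G → Rˣ} (hc : IsTwoCocycle c) {p m j : ℕ}
    [Fact p.Prime] (hG : Nat.card G = p ^ m) (hj : (j + 1) ^ 2 + (j + 1) < 2 * m + 2)
    (B : Subgroup G) (hBn : B.Normal) (hBcomm : ∀ a b : B, a * b = b * a)
    (hBcard : Nat.card B = p ^ j) (hB : IsIsotropic c B) :
    ∃ A : Subgroup G, B ≤ A ∧ A.Normal ∧ (∀ a b : A, a * b = b * a) ∧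
      Nat.card A = p ^ (j + 1) ∧ IsIsotropic c A := by
  have hjm : (j + 1).choose 2 + j < m := by
    rw [Nat.choose_two_right, Nat.add_sub_cancel]
    have : (j + 1) ^ 2 + (j + 1) = (j + 1) * j + 2 * j + 2 := by ring
    omega
  have hBtwisted : B ≤ twistedCentralizer hc B := le_twistedCentralizer_self_iff.2 ⟨hBcomm, hB⟩
  obtain ⟨A, hBA, hAn, hAcard, hA⟩ :=
    exists_normal_le_twistedCentralizer_card_eq hG hBtwisted hBcard hjm
  obtain ⟨hAcomm, hAiso⟩ := le_twistedCentralizer_self_iff.1 hA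
  exact ⟨A, hBA, hAn, hAcomm, hAcard, hAiso⟩

theorem normal_abelian_isotropic_subgroup_general {G R : Type*} [Group G] [Finite G] [CommRing R]
    [IsDomain R] [RootableBy Rˣ ℕ] {p m i : ℕ} (hp : p.Prime) (hG : Nat.card G = p ^ m)
    {c : G → G → Rˣ} (hc : IsTwoCocycle c) (hi : i ^ 2 + i < 2 * m + 2) :
    (∃ A : Subgroup G, A.Normal ∧ (∀ a b : A, a * b = b * a) ∧ Nat.card A = p ^ i ∧
      IsIsotropic c A) ∧
    ∀ B : Subgroup G, B.Normal → (∀ a b : B, a * b = b * a) → Nat.card B = p ^ (i - 1) →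
      IsIsotropic c B → ∃ A : Subgroup G, B ≤ A ∧ A.Normal ∧ (∀ a b : A, a * b = b * a) ∧
        Nat.card A = p ^ i ∧ IsIsotropic c A := by
  have := Fact.mk hp
  refine ⟨?_, ?_⟩
  · induction i with
    | zero =>
      obtain ⟨hcomm, hiso⟩ := (le_twistedCentralizer_self_iff (hc := hc) (A := ⊥)).1 bot_le
      exact ⟨⊥, inferInstance, hcomm, by simp, hiso⟩
    | succ j ih =>
      obtain ⟨B, hBn, hBcomm, hBcard, hB⟩ := ih (by nlinarith)
      obtain ⟨A, -, hA⟩ :=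
        exists_normal_abelian_isotropic_card_eq hc hG hi B hBn hBcomm hBcard hB
      exact ⟨A, hA⟩
  · cases i with
    | zero => exact fun B hBn hBcomm hBcard hB ↦ ⟨B, le_rfl, hBn, hBcomm, hBcard, hB⟩
    | succ j => exact exists_normal_abelian_isotropic_card_eq hc hG hi

noncomputable instance rootableByNatUnits {K : Type*} [Field K] [IsAlgClosed K] :
    RootableBy Kˣ ℕ :=
  rootableByOfPowLeftSurj Kˣ ℕ fun {n} hn x ↦ by
    obtain ⟨z, hz⟩ := IsAlgClosed.exists_pow_nat_eq (x : K) (Nat.pos_of_ne_zero hn)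
    exact ⟨Units.mk0 z fun h ↦ x.ne_zero (by rw [← hz, h, zero_pow hn]), Units.ext hz⟩

/-- Let `G` be a group of order `p^m` and `[c] ∈ H²(G, ℂ*)`. If
`(i² + i − 2)/2 < m` then `[c]` admits an isotropic normal abelian subgroup of
order `p^i`; moreover any normal abelian isotropic subgroup of order `p^{i-1}` is
contained in a normal abelian isotropic subgroup of order `p^i`. -/
theorem normal_abelian_isotropic_subgroup
    {G : Type*} [Group G] [Fintype G] (p : ℕ) (hp : p.Prime) (m : ℕ)
    (hG : Fintype.card G = p ^ m)
    (c : G → G → ℂˣ)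
    (hc : ∀ g h k : G, c g h * c (g * h) k = c h k * c g (h * k))
    (i : ℕ) (hi : i ^ 2 + i < 2 * m + 2) :
    (∃ A : Subgroup G, A.Normal ∧ (∀ a b : A, a * b = b * a) ∧
      Nat.card A = p ^ i ∧
      ∃ f : A → ℂˣ, ∀ a b : A, c (a : G) (b : G) = f a * f b * (f (a * b))⁻¹) ∧
    (∀ B : Subgroup G, B.Normal → (∀ a b : B, a * b = b * a) →
      Nat.card B = p ^ (i - 1) →
      (∃ f : B → ℂˣ, ∀ a b : B, c (a : G) (b : G) = f a * f b * (f (a * b))⁻¹) →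
      ∃ A : Subgroup G, B ≤ A ∧ A.Normal ∧ (∀ a b : A, a * b = b * a) ∧
        Nat.card A = p ^ i ∧
        ∃ f : A → ℂˣ, ∀ a b : A, c (a : G) (b : G) = f a * f b * (f (a * b))⁻¹) :=
  normal_abelian_isotropic_subgroup_general hp (Nat.card_eq_fintype_card.trans hG) hc hi
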